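/- Assume the sub-critical range q > 1 and (2/3)q + 1 < p < q + 2/3. Let (γ_k) be a sequence of injective, arc-length parametrized curves γ_k ∈ C¹(ℝ/ℤ,ℝⁿ) that converges uniformly to an arc-length parametrized Lipschitz curve γ_∞ ∈ C^{0,1}(ℝ/ℤ,ℝⁿ) which is not injective. Then E_{p,q}(γ_k) → ∞ as k → ∞. -/

import Mathlib

open MeasureTheory Set Filter Topology
open scoped ENNReal

noncomputable section

/-- The area `|a ∧ b|` of the parallelogram spanned by `a, b ∈ ℝⁿ`. -/
def wedgeNorm {n : ℕ} (a b : EuclideanSpace ℝ (Fin n)) : ℝ :=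
  Real.sqrt (‖a‖ ^ 2 * ‖b‖ ^ 2 - (inner ℝ a b : ℝ) ^ 2)

/-- `1 / R^{p,q}(x,y,z) = |(y-x) ∧ (z-x)|^q / (|y-z| |y-x| |z-x|)^p`. -/
def invR {n : ℕ} (p q : ℝ) (x y z : EuclideanSpace ℝ (Fin n)) : ℝ :=
  wedgeNorm (y - x) (z - x) ^ q / (‖y - z‖ * ‖y - x‖ * ‖z - x‖) ^ p

/-- The generalized integral Menger curvature `E_{p,q}` of a closed curve,
modelled by a `1`-periodic function together with its derivative,
the parameter domain `ℝ/ℤ` being represented by `[0,1)`; values in `[0,∞]`. -/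
def menger {n : ℕ} (p q : ℝ) (γ γ' : ℝ → EuclideanSpace ℝ (Fin n)) : ℝ≥0∞ :=
  ∫⁻ u₁ in Ico (0:ℝ) 1, ∫⁻ u₂ in Ico (0:ℝ) 1, ∫⁻ u₃ in Ico (0:ℝ) 1,
    ENNReal.ofReal (‖γ' u₁‖ * ‖γ' u₂‖ * ‖γ' u₃‖ * invR p q (γ u₁) (γ u₂) (γ u₃))

/-- Injectivity of a `1`-periodic curve as a map on `ℝ/ℤ`. -/
def InjCircle {n : ℕ} (γ : ℝ → EuclideanSpace ℝ (Fin n)) : Prop :=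
  ∀ u v : ℝ, γ u = γ v → ∃ k : ℤ, v = u + k

/-- Distance on `ℝ/ℤ`. -/
def circleDist (u v : ℝ) : ℝ := ⨅ k : ℤ, |u - v - (k : ℝ)|

/-- The `ρ`-th power of the Sobolev–Slobodeckiĭ seminorm `[f]_{W^{1+s,ρ}}`
of a periodic function with derivative `f'`; values in `[0,∞]`. -/
def sobSemiPow {n : ℕ} (s ρ : ℝ) (f' : ℝ → EuclideanSpace ℝ (Fin n)) : ℝ≥0∞ :=
  ∫⁻ u in Ico (0:ℝ) 1, ∫⁻ w in Icc (-(1/2) : ℝ) (1/2),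
    ENNReal.ofReal (‖f' (u + w) - f' u‖ ^ ρ / |w| ^ (1 + ρ * s))

/-- The norm `‖f‖_{W^{1+s,ρ}} = ‖f‖_{W^{1,ρ}} + [f]_{W^{1+s,ρ}}`. -/
def sobNorm {n : ℕ} (s ρ : ℝ) (f f' : ℝ → EuclideanSpace ℝ (Fin n)) : ℝ :=
  (∫ u in Ico (0:ℝ) 1, ‖f u‖ ^ ρ) ^ (1/ρ) + (∫ u in Ico (0:ℝ) 1, ‖f' u‖ ^ ρ) ^ (1/ρ)
    + (sobSemiPow s ρ f').toReal ^ (1/ρ)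

/-- `γ` is a closed `W^{1,1}` curve with weak derivative `γ'`:
both are `1`-periodic, `γ'` is measurable and `γ` is the primitive of `γ'`. -/
structure CurvePair {n : ℕ} (γ γ' : ℝ → EuclideanSpace ℝ (Fin n)) : Prop where
  periodic : Function.Periodic γ 1
  periodic' : Function.Periodic γ' 1
  meas' : Measurable γ'
  primitive : ∀ u, γ u = γ 0 + ∫ t in (0:ℝ)..u, γ' t

section Wedge

variable {n : ℕ}

lemma wedgeNorm_nonneg (a b : EuclideanSpace ℝ (Fin n)) : 0 ≤ wedgeNorm a b :=
  Real.sqrt_nonneg _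

lemma wedgeNorm_sq (a b : EuclideanSpace ℝ (Fin n)) :
    wedgeNorm a b ^ 2 = ‖a‖ ^ 2 * ‖b‖ ^ 2 - (inner ℝ a b : ℝ) ^ 2 := by
  refine Real.sq_sqrt (sub_nonneg.2 ?_)
  rw [← mul_pow, ← sq_abs]
  exact pow_le_pow_left₀ (abs_nonneg _) (abs_real_inner_le_norm a b) 2

lemma wedgeNorm_comm (a b : EuclideanSpace ℝ (Fin n)) : wedgeNorm a b = wedgeNorm b a := by
  unfold wedgeNorm
  rw [real_inner_comm, mul_comm]

lemma wedgeNorm_le (a b : EuclideanSpace ℝ (Fin n)) : wedgeNorm a b ≤ ‖a‖ * ‖b‖ := by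
  refine abs_le_of_sq_le_sq' ?_ (by positivity) |>.2
  rw [wedgeNorm_sq]
  nlinarith [sq_nonneg (inner ℝ a b : ℝ)]

lemma norm_mul_norm_sub_wedgeNorm_le (a b : EuclideanSpace ℝ (Fin n)) :
    ‖a‖ * ‖b‖ - wedgeNorm a b ≤ |(inner ℝ a b : ℝ)| := by
  refine abs_le_of_sq_le_sq' ?_ (abs_nonneg _) |>.2
  rw [sq_abs]
  nlinarith [wedgeNorm_sq a b, wedgeNorm_le a b, wedgeNorm_nonneg a b]

/-- `‖a‖²` times the component of `b` orthogonal to `a`. -/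
def scaledReject (a b : EuclideanSpace ℝ (Fin n)) : EuclideanSpace ℝ (Fin n) :=
  (‖a‖ ^ 2) • b - (inner ℝ a b : ℝ) • a

lemma inner_scaledReject (a b c : EuclideanSpace ℝ (Fin n)) :
    (inner ℝ (scaledReject a b) (scaledReject a c) : ℝ)
      = ‖a‖ ^ 2 * (‖a‖ ^ 2 * inner ℝ b c - inner ℝ a b * inner ℝ a c) := by
  simp only [scaledReject, inner_sub_left, inner_sub_right, real_inner_smul_left,
    real_inner_smul_right, real_inner_self_eq_norm_sq, real_inner_comm a b]
  ring

lemma norm_scaledReject (a b : EuclideanSpace ℝ (Fin n)) :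
    ‖scaledReject a b‖ = ‖a‖ * wedgeNorm a b := by
  rw [← sq_eq_sq₀ (norm_nonneg _) (mul_nonneg (norm_nonneg _) (wedgeNorm_nonneg _ _)),
    ← real_inner_self_eq_norm_sq, inner_scaledReject, mul_pow, wedgeNorm_sq,
    real_inner_self_eq_norm_sq]
  ring

lemma wedgeNorm_add_right_le (a b c : EuclideanSpace ℝ (Fin n)) :
    wedgeNorm a (b + c) ≤ wedgeNorm a b + wedgeNorm a c := by
  rcases eq_or_ne a 0 with rfl | ha
  · simp [wedgeNorm]
  · have h : scaledReject a (b + c) = scaledReject a b + scaledReject a c := by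
      simp only [scaledReject, inner_add_right, smul_add, add_smul]
      abel
    have h' := norm_add_le (scaledReject a b) (scaledReject a c)
    rw [← h, norm_scaledReject, norm_scaledReject, norm_scaledReject, ← mul_add] at h'
    exact le_of_mul_le_mul_left h' (norm_pos_iff.2 ha)

lemma wedgeNorm_add_left_le (a b c : EuclideanSpace ℝ (Fin n)) :
    wedgeNorm (a + b) c ≤ wedgeNorm a c + wedgeNorm b c := by
  rw [wedgeNorm_comm, wedgeNorm_comm a, wedgeNorm_comm b]
  exact wedgeNorm_add_right_le c a b

lemma wedgeNorm_le_add (a b a' b' : EuclideanSpace ℝ (Fin n)) :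
    wedgeNorm a b ≤ wedgeNorm a' b' + ‖a - a'‖ * ‖b‖ + ‖a'‖ * ‖b - b'‖ := by
  have h₁ := wedgeNorm_add_left_le (a - a') a' b
  have h₂ := wedgeNorm_add_right_le a' (b - b') b'
  rw [sub_add_cancel] at h₁ h₂
  linarith [wedgeNorm_le (a - a') b, wedgeNorm_le a' (b - b')]

lemma inner_mul_inner_sub_le (e x y : EuclideanSpace ℝ (Fin n)) (he : e ≠ 0) :
    (inner ℝ e x * inner ℝ e y : ℝ) - wedgeNorm e x * wedgeNorm e y
      ≤ ‖e‖ ^ 2 * inner ℝ x y := by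
  have h := neg_le_of_abs_le (abs_real_inner_le_norm (scaledReject e x) (scaledReject e y))
  rw [inner_scaledReject, norm_scaledReject, norm_scaledReject] at h
  have hpos : 0 < ‖e‖ ^ 2 := by positivity
  have : 0 ≤ ‖e‖ ^ 2 * (‖e‖ ^ 2 * inner ℝ x y - inner ℝ e x * inner ℝ e y
      + wedgeNorm e x * wedgeNorm e y) := by linarith
  linarith [nonneg_of_mul_nonneg_right this hpos]

/-- Two vectors of comparable length `ℓ/2 ≤ ‖x‖, ‖y‖ ≤ ℓ` at distance at least `ℓ` that are almost
parallel point in opposite directions. -/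
lemma inner_neg_of_wedgeNorm_le {x y : EuclideanSpace ℝ (Fin n)} {l : ℝ} (hl : 0 < l)
    (hx : l / 2 ≤ ‖x‖) (hx' : ‖x‖ ≤ l) (hy : l / 2 ≤ ‖y‖) (hy' : ‖y‖ ≤ l)
    (hxy : l ≤ ‖x - y‖) (hw : wedgeNorm x y ≤ l ^ 2 / 8) : (inner ℝ x y : ℝ) < 0 := by
  by_contra! h
  have h₁ := norm_mul_norm_sub_wedgeNorm_le x y
  rw [abs_of_nonneg h] at h₁
  have h₂ := norm_sub_sq_real x y
  nlinarith

/-- Let `e` have length `d`, and let `x`, `y` be the end points of an unfolded arc through the origin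
of radius about `d`. If neither end point is closer than `d` to `e`, then `x` and `y` cannot both be
almost parallel to `e`. -/
lemma false_of_nearest {e x y : EuclideanSpace ℝ (Fin n)} {d : ℝ} (hd : 0 < d) (he : ‖e‖ = d)
    (hx : d / 2 ≤ ‖x‖) (hx' : ‖x‖ ≤ d) (hy : d / 2 ≤ ‖y‖) (hy' : ‖y‖ ≤ d)
    (hxy : d ≤ ‖x - y‖) (hxe : d ≤ ‖x - e‖) (hye : d ≤ ‖y - e‖)
    (hwx : wedgeNorm e x ≤ d ^ 2 / 8) (hwy : wedgeNorm e y ≤ d ^ 2 / 8) : False := by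
  have key : ∀ z : EuclideanSpace ℝ (Fin n), d / 2 ≤ ‖z‖ → ‖z‖ ≤ d → d ≤ ‖z - e‖ →
      wedgeNorm e z ≤ d ^ 2 / 8 → d * ‖z‖ - d ^ 2 / 8 ≤ - inner ℝ e z := by
    intro z hz hz' hze hwz
    have h₁ := norm_mul_norm_sub_wedgeNorm_le e z
    have h₂ := norm_sub_sq_real z e
    rw [real_inner_comm] at h₂
    rw [he] at h₁ h₂
    rcases abs_cases (inner ℝ e z : ℝ) with ⟨h, _⟩ | ⟨h, _⟩
    · rw [h] at h₁
      nlinarith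
    · rw [h] at h₁
      linarith
  have kx := key x hx hx' hxe hwx
  have ky := key y hy hy' hye hwy
  have h₁ := inner_mul_inner_sub_le e x y (norm_pos_iff.1 (he ▸ hd))
  rw [he] at h₁
  have h₂ := norm_sub_sq_real x y
  have h₃ : wedgeNorm e x * wedgeNorm e y ≤ d ^ 2 / 8 * (d ^ 2 / 8) :=
    mul_le_mul hwx hwy (wedgeNorm_nonneg _ _) (by positivity)
  have h₄ : (d * ‖x‖ - d ^ 2 / 8) * (d * ‖y‖ - d ^ 2 / 8) ≤ (- inner ℝ e x) * (- inner ℝ e y) :=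
    mul_le_mul kx ky (by nlinarith) (by nlinarith)
  have h₅ : d ^ 2 * (‖x‖ * ‖y‖ - d / 8 * (‖x‖ + ‖y‖)) ≤ d ^ 2 * inner ℝ x y := by nlinarith
  have h₆ := le_of_mul_le_mul_left h₅ (by positivity)
  nlinarith

end Wedge

section Flat

variable {n : ℕ}

/-- Triples of points of the curve within distance `r` span, relative to `r²`, an area of order
`r^α`. -/
def FlatTriples (K α : ℝ) (γ : ℝ → EuclideanSpace ℝ (Fin n)) : Prop :=
  ∀ r, 0 < r → r ≤ 1 → ∀ u v w, ‖γ v - γ u‖ ≤ r → ‖γ w - γ u‖ ≤ r →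
    wedgeNorm (γ v - γ u) (γ w - γ u) ≤ K * r ^ α * r ^ 2

/-- Every point of `[0,1)` is close to a subinterval of `[0,1)` of prescribed length. -/
lemma exists_Ioo_subset_Ico {u η : ℝ} (hu : u ∈ Ico (0 : ℝ) 1) (hη : 0 < η) (hη' : η ≤ 1 / 2) :
    ∃ a, Ioo a (a + η) ⊆ Ico (0 : ℝ) 1 ∧ ∀ t ∈ Ioo a (a + η), |t - u| ≤ η := by
  rcases le_total u (1 / 2) with h | h
  · refine ⟨u, fun t ht => ⟨by linarith [hu.1, ht.1], by linarith [ht.2]⟩, fun t ht => ?_⟩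
    rw [abs_le]
    constructor <;> linarith [ht.1, ht.2]
  · refine ⟨u - η, fun t ht => ⟨by linarith [ht.1], by linarith [ht.2, hu.2]⟩, fun t ht => ?_⟩
    rw [abs_le]
    constructor <;> linarith [ht.1, ht.2]

lemma const_mul_le_setLIntegral {η a : ℝ} {c : ℝ≥0∞} {f : ℝ → ℝ≥0∞}
    (hsub : Ioo a (a + η) ⊆ Ico (0 : ℝ) 1) (hf : ∀ t ∈ Ioo a (a + η), c ≤ f t) :
    c * ENNReal.ofReal η ≤ ∫⁻ t in Ico (0 : ℝ) 1, f t := by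
  calc c * ENNReal.ofReal η = ∫⁻ _ in Ioo a (a + η), c := by simp
    _ ≤ ∫⁻ t in Ioo a (a + η), f t := setLIntegral_mono' measurableSet_Ioo hf
    _ ≤ ∫⁻ t in Ico (0 : ℝ) 1, f t := lintegral_mono_set hsub

/-- A single nondegenerate triple of points on a Lipschitz curve bounds the energy from below. -/
lemma le_menger_of_wedgeNorm_pos {p q : ℝ} (hp : 0 < p) (hq : 0 < q)
    {γ : ℝ → EuclideanSpace ℝ (Fin n)} (hper : Function.Periodic γ 1)
    (hlip : ∀ s t, ‖γ s - γ t‖ ≤ |s - t|) (harc : ∀ u, ‖deriv γ u‖ = 1)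
    {r : ℝ} (hr : 0 < r) (hr1 : r ≤ 1) (u v w : ℝ) (hv : ‖γ v - γ u‖ ≤ r)
    (hw : ‖γ w - γ u‖ ≤ r) {W : ℝ} (hW : wedgeNorm (γ v - γ u) (γ w - γ u) = W) (hW0 : 0 < W) :
    ENNReal.ofReal ((W / 2) ^ q / (27 * r ^ 3) ^ p * (W / (16 * r)) ^ 3)
      ≤ menger p q γ (deriv γ) := by
  have hfr : ∀ x, γ (Int.fract x) = γ x := fun x => by
    have := hper.sub_int_mul_eq ⌊x⌋ (x := x)
    rwa [mul_one] at this
  have hmem : ∀ x : ℝ, Int.fract x ∈ Ico (0 : ℝ) 1 := fun x =>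
    ⟨Int.fract_nonneg x, Int.fract_lt_one x⟩
  have hWr : W ≤ r * r := hW ▸ (wedgeNorm_le _ _).trans
    (mul_le_mul hv hw (norm_nonneg _) hr.le)
  set η := W / (16 * r) with hη
  have hη0 : 0 < η := by positivity
  have hηr : 16 * η ≤ r := by
    rw [hη, mul_div_assoc', div_le_iff₀ (by positivity)]
    nlinarith
  have hηW : 16 * η * r = W := by
    rw [hη]
    field_simp
  obtain ⟨a, ha, ha'⟩ := exists_Ioo_subset_Ico (hmem u) hη0 (by linarith)
  obtain ⟨b, hb, hb'⟩ := exists_Ioo_subset_Ico (hmem v) hη0 (by linarith)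
  obtain ⟨c, hc, hc'⟩ := exists_Ioo_subset_Ico (hmem w) hη0 (by linarith)
  have hclose : ∀ x t, |t - Int.fract x| ≤ η → ‖γ t - γ x‖ ≤ η := fun x t h => by
    rw [← hfr x]
    exact (hlip _ _).trans h
  have key : ∀ u₁ ∈ Ioo a (a + η), ∀ u₂ ∈ Ioo b (b + η), ∀ u₃ ∈ Ioo c (c + η),
      ENNReal.ofReal ((W / 2) ^ q / (27 * r ^ 3) ^ p) ≤
      ENNReal.ofReal (‖deriv γ u₁‖ * ‖deriv γ u₂‖ * ‖deriv γ u₃‖ *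
        invR p q (γ u₁) (γ u₂) (γ u₃)) := by
    intro u₁ h₁ u₂ h₂ u₃ h₃
    have c₁ := hclose u u₁ (ha' _ h₁)
    have c₂ := hclose v u₂ (hb' _ h₂)
    have c₃ := hclose w u₃ (hc' _ h₃)
    apply ENNReal.ofReal_le_ofReal
    rw [harc, harc, harc, one_mul, one_mul, one_mul, invR]
    have d₂ : ‖(γ v - γ u) - (γ u₂ - γ u₁)‖ ≤ 2 * η := by
      rw [show (γ v - γ u) - (γ u₂ - γ u₁) = (γ u₁ - γ u) - (γ u₂ - γ v) by abel]
      linarith [norm_sub_le (γ u₁ - γ u) (γ u₂ - γ v)]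
    have d₃ : ‖(γ w - γ u) - (γ u₃ - γ u₁)‖ ≤ 2 * η := by
      rw [show (γ w - γ u) - (γ u₃ - γ u₁) = (γ u₁ - γ u) - (γ u₃ - γ w) by abel]
      linarith [norm_sub_le (γ u₁ - γ u) (γ u₃ - γ w)]
    have e₂ : ‖γ u₂ - γ u₁‖ ≤ 9 / 8 * r := by
      linarith [norm_sub_norm_le (γ u₂ - γ u₁) (γ v - γ u),
        norm_sub_rev (γ u₂ - γ u₁) (γ v - γ u)]
    have e₃ : ‖γ u₃ - γ u₁‖ ≤ 9 / 8 * r := by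
      linarith [norm_sub_norm_le (γ u₃ - γ u₁) (γ w - γ u),
        norm_sub_rev (γ u₃ - γ u₁) (γ w - γ u)]
    have e₁ : ‖γ u₂ - γ u₃‖ ≤ 9 / 4 * r := by
      rw [show γ u₂ - γ u₃ = (γ u₂ - γ u₁) - (γ u₃ - γ u₁) by abel]
      linarith [norm_sub_le (γ u₂ - γ u₁) (γ u₃ - γ u₁)]
    have hwedge : W / 2 ≤ wedgeNorm (γ u₂ - γ u₁) (γ u₃ - γ u₁) := by
      have h := wedgeNorm_le_add (γ v - γ u) (γ w - γ u) (γ u₂ - γ u₁) (γ u₃ - γ u₁)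
      have g₁ : ‖(γ v - γ u) - (γ u₂ - γ u₁)‖ * ‖γ w - γ u‖ ≤ 2 * η * r :=
        mul_le_mul d₂ hw (norm_nonneg _) (by positivity)
      have g₂ : ‖γ u₂ - γ u₁‖ * ‖(γ w - γ u) - (γ u₃ - γ u₁)‖ ≤ 9 / 8 * r * (2 * η) :=
        mul_le_mul e₂ d₃ (norm_nonneg _) (by positivity)
      rw [hW] at h
      nlinarith
    have hpos := lt_of_lt_of_le (half_pos hW0) hwedge
    have n₂ : 0 < ‖γ u₂ - γ u₁‖ := by
      rw [norm_pos_iff]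
      intro h
      rw [h] at hpos
      simp [wedgeNorm] at hpos
    have n₃ : 0 < ‖γ u₃ - γ u₁‖ := by
      rw [norm_pos_iff]
      intro h
      rw [h] at hpos
      simp [wedgeNorm] at hpos
    have n₁ : 0 < ‖γ u₂ - γ u₃‖ := by
      rw [norm_pos_iff]
      intro h
      rw [sub_eq_zero.1 h] at hpos
      have : wedgeNorm (γ u₃ - γ u₁) (γ u₃ - γ u₁) = 0 := by
        rw [wedgeNorm, real_inner_self_eq_norm_sq]
        ring_nf
        exact Real.sqrt_zero
      linarith
    have hden : ‖γ u₂ - γ u₃‖ * ‖γ u₂ - γ u₁‖ * ‖γ u₃ - γ u₁‖ ≤ 27 * r ^ 3 := by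
      calc ‖γ u₂ - γ u₃‖ * ‖γ u₂ - γ u₁‖ * ‖γ u₃ - γ u₁‖
          ≤ (9 / 4 * r) * (9 / 8 * r) * (9 / 8 * r) := by gcongr
        _ ≤ 27 * r ^ 3 := by nlinarith [pow_pos hr 3]
    exact div_le_div₀ (by positivity) (Real.rpow_le_rpow (by positivity) hwedge hq.le)
      (by positivity) (Real.rpow_le_rpow (by positivity) hden hp.le)
  rw [ENNReal.ofReal_mul (by positivity), ENNReal.ofReal_pow hη0.le]
  refine le_of_eq_of_le ?_ <| const_mul_le_setLIntegral ha fun u₁ h₁ =>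
    const_mul_le_setLIntegral hb fun u₂ h₂ => const_mul_le_setLIntegral hc fun u₃ h₃ =>
      key u₁ h₁ u₂ h₂ u₃ h₃
  ring

/-- An energy bound yields flatness of triples with a power-law rate. -/
lemma flatTriples_of_menger_le {p q : ℝ} (hp : 0 < p) (hq : 0 < q) {M : ℝ} (hM : 0 ≤ M)
    {γ : ℝ → EuclideanSpace ℝ (Fin n)} (hper : Function.Periodic γ 1)
    (hlip : ∀ s t, ‖γ s - γ t‖ ≤ |s - t|) (harc : ∀ u, ‖deriv γ u‖ = 1)
    (hE : menger p q γ (deriv γ) ≤ ENNReal.ofReal M) :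
    FlatTriples ((M * 27 ^ p * 2 ^ q * 16 ^ 3) ^ (3 + q)⁻¹) ((3 * p - 2 * q - 3) / (3 + q)) γ := by
  intro r hr hr1 u v w hv hw
  set W := wedgeNorm (γ v - γ u) (γ w - γ u) with hW
  rcases (wedgeNorm_nonneg (γ v - γ u) (γ w - γ u)).eq_or_lt with h0 | h0
  · rw [hW, ← h0]
    positivity
  have h := (le_menger_of_wedgeNorm_pos hp hq hper hlip harc hr hr1 u v w hv hw hW.symm h0).trans hE
  rw [ENNReal.ofReal_le_ofReal_iff hM] at h
  rw [← hW] at h0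
  have hr3 : (27 * r ^ 3 : ℝ) ^ p = 27 ^ p * r ^ (3 * p) := by
    rw [Real.mul_rpow (by norm_num) (by positivity), Real.rpow_mul hr.le]
    norm_num
  have hpow : W ^ (3 + q) ≤ (M * 27 ^ p * 2 ^ q * 16 ^ 3) * r ^ (3 * p + 3) := by
    rw [Real.div_rpow h0.le (by norm_num), hr3, div_pow, div_div, div_mul_div_comm,
      div_le_iff₀ (by positivity)] at h
    have e₁ : W ^ (3 + q) = W ^ q * W ^ 3 := by
      rw [add_comm, Real.rpow_add h0]
      norm_num
    have e₂ : r ^ (3 * p + 3) = r ^ (3 * p) * r ^ 3 := by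
      rw [Real.rpow_add hr]
      norm_num
    rw [e₁, e₂]
    exact h.trans_eq (by ring)
  have hexp : (3 * p - 2 * q - 3) / (3 + q) + 2 = (3 * p + 3) * (3 + q)⁻¹ := by
    field_simp
    ring
  have hr2 : r ^ ((3 * p - 2 * q - 3) / (3 + q)) * r ^ 2 = (r ^ (3 * p + 3)) ^ (3 + q)⁻¹ := by
    rw [← Real.rpow_mul hr.le, ← hexp, Real.rpow_add hr]
    norm_num
  rw [mul_assoc, hr2, ← Real.mul_rpow (by positivity) (by positivity)]
  exact (Real.le_rpow_inv_iff_of_pos h0.le (by positivity) (by positivity)).2 hpow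

lemma exists_forall_mul_rpow_le (C : ℝ) {α ε : ℝ} (hα : 0 < α) (hε : 0 < ε) :
    ∃ R, 0 < R ∧ R ≤ 1 ∧ ∀ r, 0 ≤ r → r ≤ R → C * r ^ α ≤ ε := by
  have h : Tendsto (fun r : ℝ => C * r ^ α) (𝓝 0) (𝓝 (C * 0 ^ α)) :=
    ((Real.continuousAt_rpow_const 0 α (Or.inr hα.le)).const_mul C).tendsto
  rw [Real.zero_rpow hα.ne', mul_zero] at h
  obtain ⟨δ, hδ, hball⟩ := Metric.eventually_nhds_iff.1 (h.eventually (gt_mem_nhds hε))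
  refine ⟨min (δ / 2) 1, by positivity, min_le_right _ _, fun r hr hrR => (hball ?_).le⟩
  rw [Real.dist_eq, sub_zero, abs_of_nonneg hr]
  linarith [min_le_left (δ / 2) 1]

/-- The chord-arc estimate `a |s - t| ≤ |γ(s) - γ(t)|` up to the scale `r`. -/
def ChordArc (γ : ℝ → EuclideanSpace ℝ (Fin n)) (a r : ℝ) : Prop :=
  ∀ s t, |s - t| ≤ r → a * |s - t| ≤ ‖γ s - γ t‖

/-- Passing from one scale to its double, flat curves lose little in the chord-arc estimate. -/
lemma ChordArc.double {K α : ℝ} (hK : 0 ≤ K) (hα : 0 < α) {γ : ℝ → EuclideanSpace ℝ (Fin n)}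
    (hlip : ∀ s t, ‖γ s - γ t‖ ≤ |s - t|) (hflat : FlatTriples K α γ)
    {a r : ℝ} (ha : 1 / 2 ≤ a) (hr : 0 < r) (hr1 : 2 * r ≤ 1)
    (hε : K * (2 * r) ^ α ≤ 1 / 8) (h : ChordArc γ a r) :
    ChordArc γ (a - K * (2 * r) ^ α) (2 * r) := by
  set ε := K * (2 * r) ^ α with hε_def
  have hcont : Continuous γ := by
    refine (LipschitzWith.of_dist_le_mul (K := 1) fun s t => ?_).continuous
    simpa [dist_eq_norm] using hlip s t
  have main : ∀ m l, 0 < l → l ≤ r →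
      2 * l * (a - ε) ≤ ‖(γ (m - l) - γ m) - (γ (m + l) - γ m)‖ := by
    intro m l hl hlr
    have hx' : ∀ l, 0 < l → ‖γ (m - l) - γ m‖ ≤ l := fun l hl => by
      simpa [abs_of_pos hl] using hlip (m - l) m
    have hy' : ∀ l, 0 < l → ‖γ (m + l) - γ m‖ ≤ l := fun l hl => by
      simpa [abs_of_pos hl] using hlip (m + l) m
    have hx : ∀ l, 0 < l → l ≤ r → a * l ≤ ‖γ (m - l) - γ m‖ := fun l hl hlr => by
      have := h (m - l) m
      simp only [sub_sub_cancel_left, abs_neg, abs_of_pos hl] at this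
      exact this hlr
    have hy : ∀ l, 0 < l → l ≤ r → a * l ≤ ‖γ (m + l) - γ m‖ := fun l hl hlr => by
      have := h (m + l) m
      simp only [add_sub_cancel_left, abs_of_pos hl] at this
      exact this hlr
    have hw : ∀ l, 0 < l → l ≤ r →
        wedgeNorm (γ (m - l) - γ m) (γ (m + l) - γ m) ≤ ε * l ^ 2 := fun l hl hlr => by
      refine (hflat l hl (by linarith) m (m - l) (m + l) (hx' l hl) (hy' l hl)).trans ?_
      have : l ^ α ≤ (2 * r) ^ α := Real.rpow_le_rpow hl.le (by linarith) hα.le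
      rw [hε_def]
      gcongr
    have hε0 : 0 ≤ ε := by positivity
    set φ : ℝ → ℝ := fun l => inner ℝ (γ (m - l) - γ m) (γ (m + l) - γ m) with hφ
    have hφc : Continuous φ := by fun_prop
    have hφ0 : ∀ l, 0 < l → l ≤ r → φ l ≠ 0 := fun l hl hlr h0 => by
      have g := norm_mul_norm_sub_wedgeNorm_le (γ (m - l) - γ m) (γ (m + l) - γ m)
      rw [show (inner ℝ (γ (m - l) - γ m) (γ (m + l) - γ m) : ℝ) = 0 from h0, abs_zero] at g
      have hx₁ : l / 2 ≤ ‖γ (m - l) - γ m‖ := by nlinarith [hx l hl hlr]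
      have hy₁ : l / 2 ≤ ‖γ (m + l) - γ m‖ := by nlinarith [hy l hl hlr]
      nlinarith [hw l hl hlr, mul_le_mul hx₁ hy₁ (by positivity) (norm_nonneg _), pow_pos hl 2]
    have hneg : φ l < 0 := by
      have hl₁ : 0 < min l (r / 2) := by positivity
      have hl₂ : min l (r / 2) ≤ r / 2 := min_le_right _ _
      have hstart : φ (min l (r / 2)) < 0 := by
        generalize min l (r / 2) = l' at hl₁ hl₂
        have hl₃ : l' ≤ r := by linarith
        refine inner_neg_of_wedgeNorm_le hl₁ ?_ (hx' l' hl₁) ?_ (hy' l' hl₁) ?_ ?_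
        · nlinarith [hx l' hl₁ hl₃]
        · nlinarith [hy l' hl₁ hl₃]
        · have := h (m - l') (m + l')
          rw [show m - l' - (m + l') = -(2 * l') by ring, abs_neg, abs_of_pos (by linarith)] at this
          rw [sub_sub_sub_cancel_right]
          nlinarith [this (by linarith)]
        · nlinarith [hw l' hl₁ hl₃, pow_pos hl₁ 2]
      by_contra! hge
      obtain ⟨l', hl', h0⟩ := intermediate_value_Icc (min_le_left l (r / 2)) hφc.continuousOn
        ⟨hstart.le, hge⟩
      exact hφ0 l' (hl₁.trans_le hl'.1) (hl'.2.trans hlr) h0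
    have g := norm_mul_norm_sub_wedgeNorm_le (γ (m - l) - γ m) (γ (m + l) - γ m)
    rw [abs_of_neg (show inner ℝ (γ (m - l) - γ m) (γ (m + l) - γ m) < 0 from hneg)] at g
    have g₂ := norm_sub_sq_real (γ (m - l) - γ m) (γ (m + l) - γ m)
    have hwl := hw l hl hlr
    have hxl := hx l hl hlr
    have hyl := hy l hl hlr
    generalize γ (m - l) - γ m = x at *
    generalize γ (m + l) - γ m = y at *
    have hS : 2 * a * l ≤ ‖x‖ + ‖y‖ := by linarith
    have hSl : l ≤ ‖x‖ + ‖y‖ := by nlinarith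
    have hsq : (‖x‖ + ‖y‖ - 2 * ε * l) ^ 2 ≤ ‖x - y‖ ^ 2 := by
      nlinarith [mul_nonneg (mul_nonneg hε0 hl.le) (sub_nonneg.2 hSl),
        mul_nonneg (mul_nonneg hε0 (sq_nonneg l)) (sub_nonneg.2 hε)]
    have := abs_le_of_sq_le_sq' hsq (norm_nonneg _) |>.2
    linarith
  have ordered : ∀ s t, s < t → t - s ≤ 2 * r → (a - ε) * (t - s) ≤ ‖γ s - γ t‖ := by
    intro s t hst hts
    have := main ((s + t) / 2) ((t - s) / 2) (by linarith) (by linarith)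
    rw [sub_sub_sub_cancel_right, show (s + t) / 2 - (t - s) / 2 = s by ring,
      show (s + t) / 2 + (t - s) / 2 = t by ring] at this
    linarith
  intro s t hst
  rcases lt_trichotomy s t with hlt | rfl | hlt
  · rw [abs_sub_comm, abs_of_pos (sub_pos.2 hlt)] at hst ⊢
    exact ordered s t hlt hst
  · simp
  · rw [abs_of_pos (sub_pos.2 hlt)] at hst ⊢
    rw [norm_sub_rev]
    exact ordered t s hlt hst

/-- A `C¹` closed arc-length curve is almost isometric at small scales. -/
lemma exists_chordArc_of_contDiff {γ : ℝ → EuclideanSpace ℝ (Fin n)} (hC1 : ContDiff ℝ 1 γ)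
    (hper : Function.Periodic γ 1) (harc : ∀ u, ‖deriv γ u‖ = 1) :
    ∃ ρ, 0 < ρ ∧ ChordArc γ (3 / 4) ρ := by
  have hdc : Continuous (deriv γ) := hC1.continuous_deriv le_rfl
  have huc := (isCompact_Icc (a := (-1 : ℝ)) (b := 2)).uniformContinuousOn_of_continuous
    hdc.continuousOn
  obtain ⟨δ, hδ, hunif⟩ := Metric.uniformContinuousOn_iff.1 huc (1 / 4) (by norm_num)
  refine ⟨min (δ / 2) 1, by positivity, ?_⟩
  have base : ∀ s ∈ Icc (0 : ℝ) 1, ∀ t, |s - t| ≤ min (δ / 2) 1 →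
      3 / 4 * |s - t| ≤ ‖γ s - γ t‖ := by
    intro s hs t hst
    have h₁ : |s - t| ≤ δ / 2 := hst.trans (min_le_left _ _)
    have h₂ : |s - t| ≤ 1 := hst.trans (min_le_right _ _)
    have hder : ∀ x ∈ uIcc s t, HasDerivWithinAt (fun x => γ x - x • deriv γ s)
        (deriv γ x - deriv γ s) (uIcc s t) x := fun x _ => by
      have := ((hC1.differentiable one_ne_zero x).hasDerivAt.fun_sub
        ((hasDerivAt_id x).smul_const (deriv γ s))).hasDerivWithinAt (s := uIcc s t)
      rwa [one_smul] at this
    have hbound : ∀ x ∈ uIcc s t, ‖deriv γ x - deriv γ s‖ ≤ 1 / 4 := fun x hx => by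
      have hxs : |x - s| ≤ |s - t| := by
        rw [abs_sub_comm s t]
        exact abs_sub_left_of_mem_uIcc hx
      have hxs' := abs_le.1 (hxs.trans h₂)
      rw [← dist_eq_norm]
      refine (hunif x ⟨by linarith [hs.1], by linarith [hs.2]⟩ s
        ⟨by linarith [hs.1], by linarith [hs.2]⟩ ?_).le
      rw [Real.dist_eq]
      linarith
    have hmv := (convex_uIcc s t).norm_image_sub_le_of_norm_hasDerivWithin_le hder hbound
      left_mem_uIcc right_mem_uIcc
    have heq : (γ t - t • deriv γ s) - (γ s - s • deriv γ s)
        = (s - t) • deriv γ s - (γ s - γ t) := by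
      rw [sub_smul]
      abel
    rw [heq, Real.norm_eq_abs, abs_sub_comm t s] at hmv
    have := norm_sub_norm_le ((s - t) • deriv γ s) (γ s - γ t)
    rw [norm_smul, harc, mul_one, Real.norm_eq_abs] at this
    linarith
  intro s t hst
  have hfl : ∀ x, γ (x - ⌊s⌋) = γ x := fun x => by
    have := hper.sub_int_mul_eq ⌊s⌋ (x := x)
    rwa [mul_one] at this
  have := base (s - ⌊s⌋) ⟨Int.fract_nonneg s, (Int.fract_lt_one s).le⟩ (t - ⌊s⌋)
  rw [sub_sub_sub_cancel_right, hfl, hfl] at this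
  exact this hst

/-- Flat closed arc-length `C¹` curves satisfy a chord-arc estimate up to a uniform scale. -/
lemma exists_uniform_chordArc {K α : ℝ} (hK : 0 ≤ K) (hα : 0 < α) :
    ∃ R, 0 < R ∧ R ≤ 1 ∧ ∀ γ : ℝ → EuclideanSpace ℝ (Fin n), ContDiff ℝ 1 γ →
      Function.Periodic γ 1 → (∀ u, ‖deriv γ u‖ = 1) → (∀ s t, ‖γ s - γ t‖ ≤ |s - t|) →
      FlatTriples K α γ → ChordArc γ (1 / 2) R := by
  have h2 : (2 : ℝ) ^ (-α) < 1 := Real.rpow_lt_one_of_one_lt_of_neg (by norm_num) (by linarith)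
  have h2' : (0 : ℝ) < 2 ^ (-α) := by positivity
  set C := K / (1 - 2 ^ (-α)) with hC
  have hCeq : C * (1 - 2 ^ (-α)) = K := by
    rw [hC]
    field_simp [sub_ne_zero.2 h2.ne']
  have hC0 : 0 ≤ C := div_nonneg hK (by linarith)
  have hKC : K ≤ C := by nlinarith
  obtain ⟨R, hR, hR1, hCR⟩ := exists_forall_mul_rpow_le C hα (ε := 1 / 8) (by norm_num)
  refine ⟨R, hR, hR1, fun γ hC1 hper harc hlip hflat => ?_⟩
  have ascend : ∀ N : ℕ, ChordArc γ (3 / 4 - C * (R / 2 ^ N) ^ α) (R / 2 ^ N) →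
      ChordArc γ (3 / 4 - C * R ^ α) R := by
    intro N
    induction N with
    | zero => simp
    | succ N ih =>
      intro h
      apply ih
      have hr : 0 < R / 2 ^ (N + 1) := by positivity
      have hdouble : 2 * (R / 2 ^ (N + 1)) = R / 2 ^ N := by
        rw [pow_succ]
        field_simp
      have hle : R / 2 ^ N ≤ R := div_le_self hR.le (one_le_pow₀ (by norm_num))
      have hsmall := hCR (R / 2 ^ N) (by positivity) hle
      have hpos : 0 ≤ (R / 2 ^ N) ^ α := by positivity
      have hhalf : (R / 2 ^ (N + 1)) ^ α = 2 ^ (-α) * (R / 2 ^ N) ^ α := by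
        rw [← hdouble, Real.mul_rpow (by norm_num) hr.le, ← mul_assoc,
          ← Real.rpow_add (by norm_num)]
        simp
      have key := ChordArc.double hK hα hlip hflat (a := 3 / 4 - C * (R / 2 ^ (N + 1)) ^ α)
        (r := R / 2 ^ (N + 1)) (by rw [hhalf]; nlinarith [mul_nonneg hC0 hpos]) hr
        (by rw [hdouble]; linarith) (by rw [hdouble]; nlinarith) h
      rw [hdouble, hhalf] at key
      convert key using 1
      rw [← hCeq]
      ring
  obtain ⟨ρ, hρ, hloc⟩ := exists_chordArc_of_contDiff hC1 hper harc
  obtain ⟨N, hN⟩ := exists_pow_lt_of_lt_one (div_pos hρ hR) (y := (1 / 2 : ℝ)) (by norm_num)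
  have hNρ : R / 2 ^ N ≤ ρ := by
    rw [lt_div_iff₀ hR, one_div, inv_pow, inv_mul_eq_div] at hN
    exact hN.le
  have hfinal := ascend N fun s t hst => by
    have : 0 ≤ C * (R / 2 ^ N) ^ α := by positivity
    nlinarith [hloc s t (hst.trans hNρ), abs_nonneg (s - t)]
  intro s t hst
  nlinarith [hfinal s t hst, hCR R hR.le le_rfl, abs_nonneg (s - t)]

end Flat

section Separation

variable {n : ℕ}

/-- An injective closed arc-length curve that is flat and satisfies a chord-arc estimate keeps
points of distant parameters apart by a definite amount. -/
lemma le_norm_sub_of_chordArc {K α : ℝ} {γ : ℝ → EuclideanSpace ℝ (Fin n)}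
    (hper : Function.Periodic γ 1) (hinj : InjCircle γ) (hlip : ∀ s t, ‖γ s - γ t‖ ≤ |s - t|)
    (hflat : FlatTriples K α γ) {δ c : ℝ} (hδ : 0 < δ)
    (hchord : ChordArc γ (1 / 2) (2 * δ)) (hcδ : c ≤ δ / 4)
    (hc : ∀ r, 0 ≤ r → r ≤ c → K * r ^ α ≤ 1 / 8)
    {u v : ℝ} (huv : δ ≤ v - u) (huv' : v - u ≤ 1 - δ) : c ≤ ‖γ v - γ u‖ := by
  by_contra! hlt
  have hcont : Continuous γ := by
    refine (LipschitzWith.of_dist_le_mul (K := 1) fun s t => ?_).continuous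
    simpa [dist_eq_norm] using hlip s t
  have hshift : ∀ (k : ℤ) (x : ℝ), γ (x - k) = γ x := fun k x => by
    have := hper.sub_int_mul_eq k (x := x)
    rwa [mul_one] at this
  have hcomp : IsCompact (Icc (0 : ℝ) 1 ×ˢ Icc δ (1 - δ)) := isCompact_Icc.prod isCompact_Icc
  obtain ⟨⟨s, τ⟩, hmem, hmin⟩ := hcomp.exists_isMinOn
    (f := fun z : ℝ × ℝ => ‖γ (z.1 + z.2) - γ z.1‖)
    ⟨(0, v - u), ⟨le_rfl, zero_le_one⟩, huv, huv'⟩ (by fun_prop)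
  obtain ⟨-, hτ⟩ := hmem
  replace hmin : ∀ x y, δ ≤ y - x → y - x ≤ 1 - δ → ‖γ (s + τ) - γ s‖ ≤ ‖γ y - γ x‖ := by
    intro x y h₁ h₂
    have := isMinOn_iff.1 hmin (x - ⌊x⌋, y - x)
      ⟨⟨Int.fract_nonneg x, (Int.fract_lt_one x).le⟩, h₁, h₂⟩
    simp only at this
    rwa [show x - ⌊x⌋ + (y - x) = y - ⌊x⌋ by ring, hshift, hshift] at this
  simp only [mem_Icc] at hτ
  set d := ‖γ (s + τ) - γ s‖ with hd
  have hdc : d < c := (hmin u v huv huv').trans_lt hlt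
  have hd0 : 0 < d := by
    rw [hd, norm_pos_iff, sub_ne_zero]
    intro heq
    obtain ⟨k, hk⟩ := hinj _ _ heq
    have hk₁ : (k : ℝ) < 0 := by linarith [hτ.1]
    have hk₂ : (-1 : ℝ) < k := by linarith [hτ.2]
    have hk₁' : k < 0 := by exact_mod_cast hk₁
    have hk₂' : -1 < k := by exact_mod_cast hk₂
    omega
  have hτ₁ : 2 * δ < τ := by
    by_contra! h
    have := hchord (s + τ) s
    rw [add_sub_cancel_left, abs_of_pos (by linarith [hτ.1])] at this
    linarith [this h, hτ.1]
  have hτ₂ : τ < 1 - 2 * δ := by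
    by_contra! h
    have := hchord (s + 1) (s + τ)
    rw [show s + 1 - (s + τ) = 1 - τ by ring, abs_of_pos (by linarith [hτ.2]), hper s,
      norm_sub_rev] at this
    linarith [this (by linarith), hτ.2]
  have hx' : ‖γ (s + d) - γ s‖ ≤ d := by simpa [abs_of_pos hd0] using hlip (s + d) s
  have hy' : ‖γ (s - d) - γ s‖ ≤ d := by simpa [abs_of_pos hd0] using hlip (s - d) s
  have hwedge : ∀ t, ‖γ t - γ s‖ ≤ d →
      wedgeNorm (γ (s + τ) - γ s) (γ t - γ s) ≤ d ^ 2 / 8 := fun t ht => by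
    have h₁ := hflat d hd0 (by linarith) s (s + τ) t hd.symm.le ht
    nlinarith [hc d hd0.le hdc.le, pow_pos hd0 2]
  refine false_of_nearest hd0 hd.symm (x := γ (s + d) - γ s) (y := γ (s - d) - γ s)
    ?_ hx' ?_ hy' ?_ ?_ ?_ (hwedge _ hx') (hwedge _ hy')
  · have := hchord (s + d) s
    rw [add_sub_cancel_left, abs_of_pos hd0] at this
    linarith [this (by linarith)]
  · have := hchord (s - d) s
    rw [sub_sub_cancel_left, abs_neg, abs_of_pos hd0] at this
    linarith [this (by linarith)]
  · have := hchord (s + d) (s - d)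
    rw [show s + d - (s - d) = 2 * d by ring, abs_of_pos (by linarith)] at this
    rw [sub_sub_sub_cancel_right]
    linarith [this (by linarith)]
  · rw [sub_sub_sub_cancel_right, norm_sub_rev]
    exact hmin (s + d) (s + τ) (by linarith) (by linarith)
  · rw [sub_sub_sub_cancel_right, norm_sub_rev]
    exact hmin (s - d) (s + τ) (by linarith) (by linarith)

end Separation

/-- **Self-repulsion / energy blow-up.** In the sub-critical range, if a
sequence of injective arc-length parametrized closed `C¹` curves converges
uniformly to a non-injective arc-length parametrized Lipschitz curve, then
the energies blow up: `E_{p,q}(γ_k) → ∞`. -/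
theorem energy_blow_up (n : ℕ) (p q : ℝ)
    (hq : 1 < q) (hp₁ : 2/3 * q + 1 < p) (hp₂ : p < q + 2/3)
    (γ : ℕ → ℝ → EuclideanSpace ℝ (Fin n))
    (γinf : ℝ → EuclideanSpace ℝ (Fin n))
    (hC1 : ∀ k, ContDiff ℝ 1 (γ k))
    (hper : ∀ k, Function.Periodic (γ k) 1)
    (hinj : ∀ k, InjCircle (γ k))
    (harc : ∀ k, ∀ u, ‖deriv (γ k) u‖ = 1)
    (hperinf : Function.Periodic γinf 1)
    (hlip : LipschitzWith 1 γinf)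
    (harcinf : ∀ᵐ u : ℝ, ‖deriv γinf u‖ = 1)
    (hnotinj : ¬ InjCircle γinf)
    (hconv : ∀ ε : ℝ, 0 < ε → ∃ N : ℕ, ∀ k ≥ N, ∀ u : ℝ,
      ‖γ k u - γinf u‖ ≤ ε) :
    Tendsto (fun k => menger p q (γ k) (deriv (γ k))) atTop (𝓝 ⊤) := by
  have hp : 0 < p := by linarith
  have hq0 : 0 < q := by linarith
  have hα : 0 < (3 * p - 2 * q - 3) / (3 + q) := div_pos (by linarith) (by linarith)
  have hlipk : ∀ k s t, ‖γ k s - γ k t‖ ≤ |s - t| := fun k s t => by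
    have h := lipschitzWith_of_nnnorm_deriv_le (C := 1)
      ((hC1 k).differentiable one_ne_zero) fun u => by
        rw [← NNReal.coe_le_coe, coe_nnnorm, harc k u, NNReal.coe_one]
    simpa [dist_eq_norm] using h.dist_le_mul s t
  -- a double point of the limit, normalised to parameters with `0 < v - u < 1`
  obtain ⟨u, v, heq, hu, hv⟩ : ∃ u v, γinf u = γinf v ∧ 0 < v - u ∧ v - u < 1 := by
    unfold InjCircle at hnotinj
    push Not at hnotinj
    obtain ⟨u, v, heq, hne⟩ := hnotinj
    refine ⟨u, v - ⌊v - u⌋, ?_, ?_, ?_⟩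
    · have := hperinf.sub_int_mul_eq ⌊v - u⌋ (x := v)
      rw [mul_one] at this
      rw [this, heq]
    · have h₀ : 0 ≤ v - u - ⌊v - u⌋ := Int.fract_nonneg (v - u)
      have h₁ : v - u - ⌊v - u⌋ ≠ 0 := fun h => hne ⌊v - u⌋ (by linarith)
      have := lt_of_le_of_ne h₀ h₁.symm
      linarith
    · have : v - u - ⌊v - u⌋ < 1 := Int.fract_lt_one (v - u)
      linarith
  rw [ENNReal.tendsto_nhds_top_iff_nnreal]
  intro M
  set K : ℝ := (M * 27 ^ p * 2 ^ q * 16 ^ 3) ^ (3 + q)⁻¹ with hKdef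
  have hK : 0 ≤ K := by positivity
  obtain ⟨R, hR, hR1, hchord⟩ := exists_uniform_chordArc (n := n) hK hα
  obtain ⟨c, hc, -, hcK⟩ := exists_forall_mul_rpow_le K hα (ε := 1 / 8) (by norm_num)
  set δ := min (R / 2) (min (v - u) (1 - (v - u))) with hδdef
  have hδ : 0 < δ := lt_min (by positivity) (lt_min hu (by linarith))
  have hδR : δ ≤ R / 2 := min_le_left _ _
  have hδu : δ ≤ v - u := (min_le_right _ _).trans (min_le_left _ _)
  have hδv : δ ≤ 1 - (v - u) := (min_le_right _ _).trans (min_le_right _ _)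
  set c' := min c (δ / 4) with hc'def
  have hc' : 0 < c' := by positivity
  obtain ⟨N, hN⟩ := hconv (c' / 3) (by positivity)
  filter_upwards [eventually_ge_atTop N] with k hk
  by_contra! hE
  rw [← ENNReal.ofReal_coe_nnreal] at hE
  have hflat := flatTriples_of_menger_le hp hq0 M.2 (hper k) (hlipk k) (harc k) hE
  have hsep := le_norm_sub_of_chordArc (hper k) (hinj k) (hlipk k) hflat hδ
    (fun s t hst => hchord (γ k) (hC1 k) (hper k) (harc k) (hlipk k) hflat s t (by linarith))
    (min_le_right c (δ / 4)) (fun r hr hrc => hcK r hr (hrc.trans (min_le_left _ _)))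
    hδu (by linarith)
  have hu' := hN k hk u
  have hv' := hN k hk v
  have htri : γ k v - γ k u = (γ k v - γinf v) - (γ k u - γinf u) := by
    rw [heq]
    abel
  have := norm_sub_le (γ k v - γinf v) (γ k u - γinf u)
  rw [← htri] at this
  linarith
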